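/- For every integer m ≥ 1, the series Σ_{l=0}^∞ (−1)^l · l! · π^{−1−l} · b_{p(l+1)−m} converges in K (with the convention b_j = 0 for j < 0) and its sum equals p·(−1)^{m−1}·(m−1)!·π^{−m}. (This is the coefficientwise form of the identity H(λ_0,x) = p·G(λ_0,x) of the paper, where G(λ_0,x) = Σ_{l≥0} (−1)^l l! (πλ_0 x^{â_0})^{−1−l} and H(λ_0,x) = γ_−( exp(π(λ_0 x^{â_0} − λ_0^p x^{p·â_0})) · G(λ_0^p, x^p) ), γ_− denoting truncation to negative powers of λ_0 x^{â_0}.) -/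

import Mathlib

open scoped BigOperators Classical

namespace AHG

/-- `hat v = (1, v) ∈ ℤ^{n+1}`: coordinate `0` equals `1`, the rest is `v`. -/
def hat {n : ℕ} (v : Fin n → ℤ) : Fin (n + 1) → ℤ := Fin.cons 1 v

/-- The coefficients `b_i` of the Dwork series
`θ(t) = exp(π(t - t^p)) = exp(πt)·exp(-πt^p) = Σ b_i t^i`;
explicitly `b_i = Σ_{j + p k = i} π^{j+k} (-1)^k / (j! k!)`. -/
noncomputable def dworkB (p : ℕ) {K : Type*} [Field K] (π : K) (i : ℕ) : K :=
  ∑ k ∈ Finset.range (i + 1),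
    if p * k ≤ i then
      ((-1 : K) ^ k * π ^ (i - p * k + k)) /
        ((Nat.factorial (i - p * k) : K) * (Nat.factorial k : K))
    else 0

/-- The real cone `C` generated by `â_0, …, â_N`. -/
def cone {n N : ℕ} (a : Fin (N + 1) → Fin n → ℤ) : Set (Fin (n + 1) → ℝ) :=
  {x | ∃ t : Fin (N + 1) → ℝ, (∀ j, 0 ≤ t j) ∧
      x = ∑ j, t j • fun i => (hat (a j) i : ℝ)}

/-- `M = C ∩ ℤA`. -/
def latticeM {n N : ℕ} (a : Fin (N + 1) → Fin n → ℤ) : Set (Fin (n + 1) → ℤ) :=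
  {μ | (fun i => (μ i : ℝ)) ∈ cone a ∧
      μ ∈ AddSubgroup.closure (Set.range fun j => hat (a j))}

/-- `M°`: the elements of `M` lying on no proper (exposed) face of `C`, i.e. every linear
functional nonnegative on `C` and vanishing at `μ` vanishes identically on `C`. -/
def latticeMint {n N : ℕ} (a : Fin (N + 1) → Fin n → ℤ) : Set (Fin (n + 1) → ℤ) :=
  {μ | μ ∈ latticeM a ∧
      ∀ ℓ : (Fin (n + 1) → ℝ) →ₗ[ℝ] ℝ, (∀ x ∈ cone a, 0 ≤ ℓ x) →
        ℓ (fun i => (μ i : ℝ)) = 0 → ∀ x ∈ cone a, ℓ x = 0}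

/-- `a 0` is the unique lattice point interior to `Δ = conv(a 1, …, a N)`. -/
def uniqueInteriorPoint {n N : ℕ} (a : Fin (N + 1) → Fin n → ℤ) : Prop :=
  (fun i => (a 0 i : ℝ)) ∈
      interior (convexHull ℝ (Set.range fun j : Fin N => fun i => (a j.succ i : ℝ))) ∧
    ∀ v : Fin n → ℤ,
      (fun i => (v i : ℝ)) ∈
          interior (convexHull ℝ (Set.range fun j : Fin N => fun i => (a j.succ i : ℝ))) →
        v = a 0

/-- The set `L_+`, identified with the tuples `(l_1,…,l_N) ∈ ℤ_{≥0}^N` such that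
`Σ l_i â_i = (Σ l_i) â_0` (then `l_0 = -Σ l_i`). -/
def LplusSet {n N : ℕ} (a : Fin (N + 1) → Fin n → ℤ) : Set (Fin N → ℕ) :=
  {l | ∑ i : Fin N, l i • hat (a i.succ) = (∑ i : Fin N, l i) • hat (a 0)}

/-- The norm (sup of coefficient norms) of an element of `R`, i.e. of a formal power series
in the variables `λ_i/λ_0`, `i = 1, …, N`. -/
noncomputable def Rnorm {N : ℕ} {K : Type*} [NormedField K]
    (f : MvPowerSeries (Fin N) K) : ℝ :=
  ⨆ ν : Fin N →₀ ℕ, ‖f ν‖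

/-- Membership in `R`: bounded coefficients. -/
def memR {N : ℕ} {K : Type*} [NormedField K] (f : MvPowerSeries (Fin N) K) : Prop :=
  BddAbove (Set.range fun ν : Fin N →₀ ℕ => ‖f ν‖)

/-- Norm-convergence (in the sup norm of `R`) of a series of elements of `R` to `g`. -/
def HasSumR {ι : Type*} {N : ℕ} {K : Type*} [NormedField K]
    (f : ι → MvPowerSeries (Fin N) K) (g : MvPowerSeries (Fin N) K) : Prop :=
  Filter.Tendsto (fun s : Finset ι => Rnorm (g - ∑ i ∈ s, f i)) Filter.atTop (nhds 0)

/-- Invertibility in `R`. -/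
def invR {N : ℕ} {K : Type*} [NormedField K] (f : MvPowerSeries (Fin N) K) : Prop :=
  memR f ∧ ∃ g : MvPowerSeries (Fin N) K, memR g ∧ f * g = 1

/-- `B_μ(1, y_1, …, y_N)` as a power series (in fact a polynomial) in `y_i = λ_i/λ_0`:
the coefficient of `y^ν` is `b_{ν_0} b_{ν_1} ⋯ b_{ν_N}` where `ν_0 = μ_0 - Σ ν_i`,
whenever `(ν_0, ν_1, …, ν_N)` is a nonnegative solution of `Σ ν_i â_i = μ`, and `0` otherwise. -/
noncomputable def Bone (p : ℕ) {n N : ℕ} (a : Fin (N + 1) → Fin n → ℤ)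
    {K : Type*} [Field K] (π : K) (μ : Fin (n + 1) → ℤ) : MvPowerSeries (Fin N) K :=
  fun ν =>
    if 0 ≤ μ 0 - ∑ i : Fin N, (ν i : ℤ) ∧
        (μ 0 - ∑ i : Fin N, (ν i : ℤ)) • hat (a 0) +
          ∑ i : Fin N, (ν i : ℤ) • hat (a i.succ) = μ then
      dworkB p π (μ 0 - ∑ i : Fin N, (ν i : ℤ)).toNat * ∏ i : Fin N, dworkB p π (ν i)
    else 0

/-- The substitution `λ_i/λ_0 ↦ λ_i^p/λ_0^p` on `R`, i.e. `ξ(λ) ↦ ξ(λ^p)`. -/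
noncomputable def frobR (p : ℕ) {N : ℕ} {K : Type*} [Field K]
    (f : MvPowerSeries (Fin N) K) : MvPowerSeries (Fin N) K :=
  fun ν => if h : ∃ ν' : Fin N →₀ ℕ, p • ν' = ν then f h.choose else 0

/-- The term indexed by `ν ∈ M°` in the series defining `η_ρ`:
`π^{ρ_0-ν_0} B_{pν-ρ}(1, λ_1/λ_0, …, λ_N/λ_0) ξ_ν(λ^p)` when `pν - ρ ∈ M`, else `0`. -/
noncomputable def etaTerm (p : ℕ) {n N : ℕ} (a : Fin (N + 1) → Fin n → ℤ)
    {K : Type*} [Field K] (π : K)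
    (ξ : {μ : Fin (n + 1) → ℤ // μ ∈ latticeMint a} → MvPowerSeries (Fin N) K)
    (ρ : Fin (n + 1) → ℤ) (ν : {μ : Fin (n + 1) → ℤ // μ ∈ latticeMint a}) :
    MvPowerSeries (Fin N) K :=
  if (p : ℤ) • ν.1 - ρ ∈ latticeM a then
    π ^ (ρ 0 - ν.1 0) • (Bone p a π ((p : ℤ) • ν.1 - ρ) * frobR p (ξ ν))
  else 0


/-- The index type `M°` (as a subtype). -/
abbrev Msub {n N : ℕ} (a : Fin (N + 1) → Fin n → ℤ) : Type _ :=
  {μ : Fin (n + 1) → ℤ // μ ∈ latticeMint a}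

/-- Membership in `S`: a family `(ξ_μ)_{μ ∈ M°}` of elements of `R` with uniformly
bounded coefficients. -/
def memS {n N : ℕ} (a : Fin (N + 1) → Fin n → ℤ) {K : Type*} [NormedField K]
    (ξ : {μ : Fin (n + 1) → ℤ // μ ∈ latticeMint a} → MvPowerSeries (Fin N) K) : Prop :=
  BddAbove (Set.range
    fun q : {μ : Fin (n + 1) → ℤ // μ ∈ latticeMint a} × (Fin N →₀ ℕ) => ‖ξ q.1 q.2‖)

/-- The norm on `S`. -/
noncomputable def Snorm {n N : ℕ} (a : Fin (N + 1) → Fin n → ℤ) {K : Type*} [NormedField K]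
    (ξ : {μ : Fin (n + 1) → ℤ // μ ∈ latticeMint a} → MvPowerSeries (Fin N) K) : ℝ :=
  ⨆ μ : {μ : Fin (n + 1) → ℤ // μ ∈ latticeMint a}, Rnorm (ξ μ)

/-- The truncation `Φ_1` of `Φ`, as a function of `λ = (λ_0, …, λ_N)`. -/
noncomputable def Phi1 (p : ℕ) {n N : ℕ} (a : Fin (N + 1) → Fin n → ℤ)
    {K : Type*} [Field K] (lam : Fin (N + 1) → K) : K :=
  ∑ l ∈ (Fintype.piFinset fun _ : Fin N => Finset.range p).filter
      (fun l => l ∈ LplusSet a ∧ ∑ i : Fin N, l i ≤ p - 1),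
    (-1 : K) ^ (∑ i : Fin N, l i) * (Nat.multinomial Finset.univ l : K) *
      ∏ i : Fin N, (lam i.succ / lam 0) ^ l i

/-- The open polydisk `𝒟`. -/
def Dopen {N : ℕ} {K : Type*} [NormedField K] : Set (Fin (N + 1) → K) :=
  {lam | lam 0 ≠ 0 ∧ ∀ i : Fin N, ‖lam i.succ / lam 0‖ < 1}

/-- The region `𝒟_+`. -/
def Dplus (p : ℕ) {n N : ℕ} (a : Fin (N + 1) → Fin n → ℤ) {K : Type*} [NormedField K] :
    Set (Fin (N + 1) → K) :=
  {lam | lam 0 ≠ 0 ∧ (∀ i : Fin N, ‖lam i.succ / lam 0‖ ≤ 1) ∧ ‖Phi1 p a lam‖ = 1}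

/-- `f` is (on `𝒟_+`) a rational function of `λ_1/λ_0, …, λ_N/λ_0` defined at every
point of `𝒟_+`. -/
def RatOnDplus (p : ℕ) {n N : ℕ} (a : Fin (N + 1) → Fin n → ℤ) {K : Type*} [NormedField K]
    (f : (Fin (N + 1) → K) → K) : Prop :=
  ∃ q r : MvPolynomial (Fin N) K,
    (∀ lam ∈ Dplus p a (K := K), MvPolynomial.eval (fun i => lam i.succ / lam 0) r ≠ 0) ∧
    ∀ lam ∈ Dplus p a (K := K),
      f lam = MvPolynomial.eval (fun i => lam i.succ / lam 0) q /
        MvPolynomial.eval (fun i => lam i.succ / lam 0) r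

/-- `F` is a uniform limit on `𝒟_+` of rational functions in the `λ_i/λ_0` defined
at every point of `𝒟_+`. -/
def UnifLimitRat (p : ℕ) {n N : ℕ} (a : Fin (N + 1) → Fin n → ℤ) {K : Type*} [NormedField K]
    (F : (Fin (N + 1) → K) → K) : Prop :=
  ∃ u : ℕ → (Fin (N + 1) → K) → K, (∀ k, RatOnDplus p a (u k)) ∧
    TendstoUniformlyOn u F Filter.atTop (Dplus p a (K := K))

/-- Membership in `R'`: the power series converges on `𝒟` and its sum extends to an
element of `R'`, i.e. to a uniform limit on `𝒟_+` of rational functions in the `λ_i/λ_0`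
defined at every point of `𝒟_+`. -/
def memR' (p : ℕ) {n N : ℕ} (a : Fin (N + 1) → Fin n → ℤ) {K : Type*} [NormedField K]
    (c : MvPowerSeries (Fin N) K) : Prop :=
  ∃ F : (Fin (N + 1) → K) → K, UnifLimitRat p a F ∧
    ∀ lam ∈ Dopen (N := N) (K := K),
      HasSum (fun ν : Fin N →₀ ℕ => c ν * ∏ i : Fin N, (lam i.succ / lam 0) ^ ν i) (F lam)

/-- Invertibility in `R'`. -/
def invR' (p : ℕ) {n N : ℕ} (a : Fin (N + 1) → Fin n → ℤ) {K : Type*} [NormedField K]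
    (f : MvPowerSeries (Fin N) K) : Prop :=
  memR' p a f ∧ ∃ g : MvPowerSeries (Fin N) K, memR' p a g ∧ f * g = 1

/-- Membership in `S'`. -/
def memS' (p : ℕ) {n N : ℕ} (a : Fin (N + 1) → Fin n → ℤ) {K : Type*} [NormedField K]
    (ξ : {μ : Fin (n + 1) → ℤ // μ ∈ latticeMint a} → MvPowerSeries (Fin N) K) : Prop :=
  memS a ξ ∧ ∀ μ, memR' p a (ξ μ)

/-- Membership in `T`: `ξ ∈ S`, `ξ_{â_0} = 1` and `‖ξ‖ = 1`; the distinguished index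
`μ0 ∈ M°` is the point `â_0`. -/
def memT {n N : ℕ} (a : Fin (N + 1) → Fin n → ℤ) {K : Type*} [NormedField K]
    (μ0 : {μ : Fin (n + 1) → ℤ // μ ∈ latticeMint a})
    (ξ : {μ : Fin (n + 1) → ℤ // μ ∈ latticeMint a} → MvPowerSeries (Fin N) K) : Prop :=
  memS a ξ ∧ ξ μ0 = 1 ∧ Snorm a ξ = 1

/-- `ζ` is a value of the map `β` at `ξ`: `ζ = α*(ξ)/η_{â_0}`, where
`α*(ξ) = (η_ρ)_{ρ ∈ M°}` is given by the norm-convergent series of `etaTerm`s. -/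
def isBeta (p : ℕ) {n N : ℕ} (a : Fin (N + 1) → Fin n → ℤ) {K : Type*} [NormedField K] (π : K)
    (μ0 : {μ : Fin (n + 1) → ℤ // μ ∈ latticeMint a})
    (ξ ζ : {μ : Fin (n + 1) → ℤ // μ ∈ latticeMint a} → MvPowerSeries (Fin N) K) : Prop :=
  ∃ η : {μ : Fin (n + 1) → ℤ // μ ∈ latticeMint a} → MvPowerSeries (Fin N) K,
    (∀ ρ, HasSumR (etaTerm p a π ξ ρ.1) (η ρ)) ∧ ∀ ρ, ζ ρ = η ρ * (η μ0)⁻¹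

/-- The coefficients `ξ_ρ` (Eq. (3.4) of the paper) of
`ξ(λ,x) = γ°(G(λ_0,x) ∏_{i=1}^N exp(πλ_i x^{â_i}))`:
`ξ_ρ = Σ (-1)^{ρ_0-1+Σl_i} (ρ_0-1+Σl_i)!/(l_1!⋯l_N!) ∏ (λ_i/λ_0)^{l_i}`, summed over
`(l_1,…,l_N) ∈ ℤ_{≥0}^N` such that `l_0 := ρ_0-1+Σl_i ≥ 0` and
`Σ l_i â_i - (l_0+1) â_0 = -ρ`. -/
noncomputable def xiRho {n N : ℕ} (a : Fin (N + 1) → Fin n → ℤ) (K : Type*) [Field K]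
    (ρ : Fin (n + 1) → ℤ) : MvPowerSeries (Fin N) K :=
  fun l =>
    if 0 ≤ ρ 0 - 1 + ∑ i : Fin N, (l i : ℤ) ∧
        (∑ i : Fin N, (l i : ℤ) • hat (a i.succ)) -
          (ρ 0 + ∑ i : Fin N, (l i : ℤ)) • hat (a 0) = -ρ then
      (-1 : K) ^ (ρ 0 - 1 + ∑ i : Fin N, (l i : ℤ)) *
        ((ρ 0 - 1 + ∑ i : Fin N, (l i : ℤ)).toNat.factorial : K) /
        ((∏ i : Fin N, (l i).factorial : ℕ) : K)
    else 0

/-- The series `Φ`, as a formal power series in the variables `λ_i/λ_0`. -/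
noncomputable def PhiSeries {n N : ℕ} (a : Fin (N + 1) → Fin n → ℤ) (K : Type*) [Field K] :
    MvPowerSeries (Fin N) K :=
  fun l =>
    if (fun i => l i) ∈ LplusSet a then
      (-1 : K) ^ (∑ i : Fin N, l i) * (Nat.multinomial Finset.univ l : K)
    else 0

/-- The truncation `Φ_1` of `Φ`, as a formal power series in the variables `λ_i/λ_0`. -/
noncomputable def Phi1Series (p : ℕ) {n N : ℕ} (a : Fin (N + 1) → Fin n → ℤ)
    (K : Type*) [Field K] : MvPowerSeries (Fin N) K :=
  fun l =>
    if (fun i => l i) ∈ LplusSet a ∧ ∑ i : Fin N, l i ≤ p - 1 then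
      (-1 : K) ^ (∑ i : Fin N, l i) * (Nat.multinomial Finset.univ l : K)
    else 0

/-- `B_μ(λ_0, …, λ_N)` as a function of `λ` (a finite sum; `finsum` junk value `0`
is irrelevant since the relevant index set is finite). -/
noncomputable def Bfull (p : ℕ) {n N : ℕ} (a : Fin (N + 1) → Fin n → ℤ)
    {K : Type*} [Field K] (π : K) (μ : Fin (n + 1) → ℤ) (lam : Fin (N + 1) → K) : K :=
  finsum fun ν : Fin (N + 1) → ℕ =>
    if ∑ j, ν j • hat (a j) = μ then
      (∏ j, dworkB p π (ν j)) * ∏ j, lam j ^ ν j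
    else 0

end AHG

open scoped BigOperators Classical

/-! Substituting `x = π * t` turns `θ` into `exp (x + x ^ p / p) = ∑ T n * x ^ n / n!` with
integral `T n`. By Wilson's theorem the recursion for `T` gains a factor `p` whenever `n` grows by
`2 * p`, so `T n` tends to `0`, and so do the terms of the series. The sum is then computed rather
than merely bounded: by the differential equation of `θ`, `π` times the series for the coefficient
of `x ^ (-m - 1)` equals `-m` times the series for the coefficient of `x ^ (-m)` plus a telescoping
series, and the coefficients of `p * G` satisfy the same recursion. -/

namespace AHG

open Filter
open scoped Topology

section TruncatedArtinHasse

/-- The integers `T n` with `exp (x + x ^ p / p) = ∑ T n * x ^ n / n!`, encoded by the recursion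
that expresses the differential equation `y' = (1 + x ^ (p - 1)) * y`. For prime `p`, `T n` is the
number of `σ` in the symmetric group on `n` letters with `σ ^ p = 1`. The truncated subtraction is
harmless because the descending factorial vanishes for `n < p - 1`. -/
def truncArtinHasse (p : ℕ) : ℕ → ℕ
  | 0 => 1
  | n + 1 => truncArtinHasse p n + n.descFactorial (p - 1) * truncArtinHasse p (n - (p - 1))

variable {p : ℕ} [hp : Fact p.Prime]

lemma prime_dvd_descFactorial_pred {n : ℕ} (hn : ¬ p ∣ n + 1) : p ∣ n.descFactorial (p - 1) := by
  have h : p ∣ (n + 1) * n.descFactorial (p - 1) := by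
    rw [← Nat.succ_descFactorial_succ, Nat.sub_add_cancel hp.out.one_le]
    exact (Nat.dvd_factorial hp.out.pos le_rfl).trans (Nat.factorial_dvd_descFactorial _ _)
  exact (hp.out.dvd_mul.1 h).resolve_left hn

lemma prime_dvd_descFactorial_pred_add_one (k : ℕ) :
    p ∣ (p * k + (p - 1)).descFactorial (p - 1) + 1 := by
  have hlt : p - 1 < p := Nat.sub_lt hp.out.pos one_pos
  have hchoose : (p * k + (p - 1)).choose (p - 1) ≡ 1 [MOD p] := by
    simpa [Nat.add_mod, Nat.mod_eq_of_lt hlt, Nat.div_eq_of_lt hlt]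
      using Choose.choose_modEq_choose_mod_mul_choose_div_nat
        (n := p * k + (p - 1)) (k := p - 1) (p := p)
  rw [← ZMod.natCast_eq_zero_iff, Nat.descFactorial_eq_factorial_mul_choose]
  push_cast
  rw [ZMod.wilsons_lemma, (ZMod.natCast_eq_natCast_iff _ _ _).2 hchoose]
  simp

lemma truncArtinHasse_add_modEq {d k : ℕ} (hd : ∀ n, p * k ≤ n → d ∣ truncArtinHasse p n)
    {r : ℕ} (hr : r < p) :
    truncArtinHasse p (p * (k + 1) + r) ≡ truncArtinHasse p (p * (k + 1)) [MOD p * d] := by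
  induction r with
  | zero => rfl
  | succ r ih =>
    have hndvd : ¬ p ∣ p * (k + 1) + r + 1 := by
      rw [add_assoc, Nat.dvd_add_right (dvd_mul_right p _)]
      exact Nat.not_dvd_of_pos_of_lt r.succ_pos hr
    have hlast := mul_dvd_mul (prime_dvd_descFactorial_pred hndvd)
      (hd (p * (k + 1) + r - (p - 1)) (by rw [mul_add]; omega))
    rw [← add_assoc, truncArtinHasse]
    simpa using (ih (by omega)).add (Nat.modEq_zero_iff_dvd.2 hlast)

lemma prime_mul_dvd_truncArtinHasse {d k : ℕ} (hd : ∀ n, p * k ≤ n → d ∣ truncArtinHasse p n)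
    {n : ℕ} (hn : p * (k + 2) ≤ n) : p * d ∣ truncArtinHasse p n := by
  obtain ⟨j, hj⟩ := Nat.exists_eq_add_of_le' ((Nat.le_div_iff_mul_le hp.out.pos).2
    (by rwa [mul_comm] at hn) : k + 2 ≤ n / p)
  have hdigits : n = p * (j + k + 1 + 1) + n % p :=
    (Nat.div_add_mod n p).symm.trans (by rw [hj]; ring)
  have hdvd : ∀ i, p * (j + k) ≤ i → d ∣ truncArtinHasse p i := fun i hi =>
    hd i ((Nat.mul_le_mul_left p (Nat.le_add_left k j)).trans hi)
  have hdvd_succ : ∀ i, p * (j + k + 1) ≤ i → d ∣ truncArtinHasse p i := fun i hi =>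
    hdvd i ((Nat.mul_le_mul_left p (Nat.le_succ _)).trans hi)
  have hmultiple : truncArtinHasse p (p * (j + k + 1 + 1)) ≡ 0 [MOD p * d] := by
    have hsucc : p * (j + k + 1 + 1) = p * (j + k + 1) + (p - 1) + 1 := by
      have hpos := hp.out.pos
      rw [mul_add p (j + k + 1)]
      omega
    rw [hsucc, truncArtinHasse, Nat.add_sub_cancel]
    calc _ ≡ truncArtinHasse p (p * (j + k + 1)) +
          (p * (j + k + 1) + (p - 1)).descFactorial (p - 1) *
            truncArtinHasse p (p * (j + k + 1)) [MOD p * d] :=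
          (truncArtinHasse_add_modEq hdvd (Nat.sub_lt hp.out.pos one_pos)).add_right _
      _ = ((p * (j + k + 1) + (p - 1)).descFactorial (p - 1) + 1) *
            truncArtinHasse p (p * (j + k + 1)) := by ring
      _ ≡ 0 [MOD p * d] := Nat.modEq_zero_iff_dvd.2
          (mul_dvd_mul (prime_dvd_descFactorial_pred_add_one _) (hdvd_succ _ le_rfl))
  rw [hdigits, ← Nat.modEq_zero_iff_dvd]
  exact (truncArtinHasse_add_modEq hdvd_succ (Nat.mod_lt n hp.out.pos)).trans hmultiple

lemma prime_pow_dvd_truncArtinHasse (j : ℕ) {n : ℕ} (hn : p * (2 * j) ≤ n) :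
    p ^ j ∣ truncArtinHasse p n := by
  induction j generalizing n with
  | zero => simp
  | succ j ih =>
    rw [pow_succ']
    exact prime_mul_dvd_truncArtinHasse (fun _ => ih) hn

end TruncatedArtinHasse

section DworkSeries

open PowerSeries

lemma derivative_rescale_exp {R : Type*} [CommRing R] [Algebra ℚ R] (a : R) :
    d⁄dX R (rescale a (exp R)) = C a * rescale a (exp R) := by
  rw [rescale_eq_subst, derivative_subst (HasSubst.smul_X' a), derivative_exp]
  simp [smul_eq_C_mul, mul_comm]

lemma derivative_expand {R : Type*} [CommRing R] {p : ℕ} (hp : p ≠ 0) (f : R⟦X⟧) :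
    d⁄dX R (expand p hp f) = expand p hp (d⁄dX R f) * ((p : R⟦X⟧) * X ^ (p - 1)) := by
  rw [expand_apply, expand_apply, derivative_subst (HasSubst.X_pow hp)]
  simp

variable {K : Type*} [Field K] [CharZero K] {p : ℕ}

lemma mk_dworkB (hp : p ≠ 0) (π : K) :
    mk (dworkB p π) = rescale π (exp K) * expand p hp (rescale (-π) (exp K)) := by
  ext n
  rw [coeff_mk, mul_comm, coeff_mul, Finset.Nat.sum_antidiagonal_eq_sum_range_succ
    (fun i j => coeff i (expand p hp (rescale (-π) (exp K))) * coeff j (rescale π (exp K))),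
    dworkB, ← Finset.sum_filter]
  simp only [coeff_expand, ite_mul, zero_mul]
  rw [← Finset.sum_filter]
  refine Finset.sum_nbij (p * ·) (fun k hk => ?_) (fun a _ b _ h => ?_) (fun q hq => ?_)
    (fun k _ => ?_)
  · simp_all
  · exact Nat.eq_of_mul_eq_mul_left (Nat.pos_of_ne_zero hp) h
  · obtain ⟨hqn, k, rfl⟩ := Finset.mem_filter.1 hq
    rw [Finset.mem_range, Nat.lt_succ_iff] at hqn
    have hk : k ≤ p * k := Nat.le_mul_of_pos_left k (Nat.pos_of_ne_zero hp)
    exact ⟨k, by simp only [Finset.coe_filter, Finset.mem_range, Set.mem_ofPred_eq]; omega, rfl⟩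
  · rw [Nat.mul_div_cancel_left _ (Nat.pos_of_ne_zero hp)]
    simp only [coeff_rescale, coeff_exp, one_div, map_inv₀, map_natCast]
    field_simp
    ring

lemma derivative_mk_dworkB (hp : p ≠ 0) (π : K) :
    d⁄dX K (mk (dworkB p π)) = C π * (1 - (p : K⟦X⟧) * X ^ (p - 1)) * mk (dworkB p π) := by
  rw [mk_dworkB hp, Derivation.leibniz, derivative_expand, derivative_rescale_exp,
    derivative_rescale_exp, map_mul, expand_C, map_neg]
  simp only [smul_eq_mul]
  ring

lemma succ_mul_dworkB_succ (hp : p ≠ 0) (π : K) (n : ℕ) :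
    (n + 1) * dworkB p π (n + 1) =
      π * dworkB p π n - p * π * if p - 1 ≤ n then dworkB p π (n - (p - 1)) else 0 := by
  have h := congrArg (coeff n) (derivative_mk_dworkB hp π)
  have hC : C π * (1 - (p : K⟦X⟧) * X ^ (p - 1)) * mk (dworkB p π) =
      C π * mk (dworkB p π) - C (p * π) * (X ^ (p - 1) * mk (dworkB p π)) := by
    rw [map_mul, map_natCast]; ring
  rw [hC, coeff_derivative, map_sub, coeff_C_mul, coeff_C_mul, coeff_X_pow_mul'] at h
  simpa [mul_comm] using h

/-- Put `x = π * t`: Dwork's `exp (π * (t - t ^ p))` becomes `exp (x + x ^ p / p)`. -/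
lemma factorial_mul_dworkB {π : K} (hp : p ≠ 0) (hπ : π ^ (p - 1) = -(p : K)) (n : ℕ) :
    n.factorial * dworkB p π n = truncArtinHasse p n * π ^ n := by
  induction n using Nat.strong_induction_on with
  | _ n ih =>
    rcases n with _ | n
    · simp [dworkB, truncArtinHasse]
    have hrec := succ_mul_dworkB_succ hp π n
    rw [truncArtinHasse, Nat.factorial_succ]
    split_ifs at hrec with hn
    · have hfac : (n.factorial : K) =
          (n - (p - 1)).factorial * n.descFactorial (p - 1) := by
        exact_mod_cast (Nat.factorial_mul_descFactorial hn).symm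
      have hpow : π ^ n = -p * π ^ (n - (p - 1)) := by
        rw [← hπ, ← pow_add, Nat.add_sub_cancel' hn]
      have ih₁ := ih n (by omega)
      have ih₂ := ih (n - (p - 1)) (by omega)
      push_cast
      linear_combination (n.factorial : K) * hrec + π * ih₁ -
        p * π * n.descFactorial (p - 1) * ih₂ -
        p * π * dworkB p π (n - (p - 1)) * hfac -
        π * n.descFactorial (p - 1) * truncArtinHasse p (n - (p - 1)) * hpow
    · have hzero : n.descFactorial (p - 1) = 0 := Nat.descFactorial_of_lt (not_le.1 hn)
      rw [hzero]
      push_cast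
      linear_combination (n.factorial : K) * hrec + π * ih n (by omega)

end DworkSeries

section Ultrametric

lemma hasSum_sub_succ_of_tendsto_zero {G : Type*} [AddCommGroup G] [UniformSpace G]
    [IsUniformAddGroup G] [NonarchimedeanAddGroup G] {f : ℕ → G} (hf : Tendsto f atTop (𝓝 0)) :
    HasSum (fun n => f n - f (n + 1)) (f 0) := by
  have hterm : Tendsto (fun n => f n - f (n + 1)) cofinite (𝓝 0) := by
    rw [Nat.cofinite_eq_atTop]
    simpa using hf.sub ((tendsto_add_atTop_iff_nat 1).2 hf)
  refine tendsto_nhds_of_cauchySeq_of_subseq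
    (NonarchimedeanAddGroup.cauchySeq_sum_of_tendsto_cofinite_zero hterm)
    tendsto_finset_range ?_
  have hrange : Tendsto (fun n => f 0 - f n) atTop (𝓝 (f 0)) := by
    simpa using tendsto_const_nhds.sub hf
  simpa only [Function.comp_def, Finset.sum_range_sub'] using hrange

lemma tendsto_zero_of_norm_le_one_mul {R : Type*} [SeminormedRing R] {c f : ℕ → R}
    (hc : ∀ n, ‖c n‖ ≤ 1) (hf : Tendsto f atTop (𝓝 0)) :
    Tendsto (fun n => c n * f n) atTop (𝓝 0) :=
  squeeze_zero_norm (fun n => (norm_mul_le _ _).trans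
    (mul_le_of_le_one_left (norm_nonneg _) (hc n))) (tendsto_zero_iff_norm_tendsto_zero.1 hf)

variable {K : Type*} [NormedField K] [IsUltrametricDist K] {p : ℕ}

lemma norm_natCast_eq_one_of_coprime (hp : ‖(p : K)‖ < 1) {n : ℕ} (hn : p.Coprime n) :
    ‖(n : K)‖ = 1 := by
  refine le_antisymm (IsUltrametricDist.norm_natCast_le_one K n) ?_
  obtain ⟨a, b, hab⟩ := Nat.isCoprime_iff_coprime.2 hn
  have hbezout : (a * p + b * n : K) = 1 := by exact_mod_cast congrArg (Int.cast (R := K)) hab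
  by_contra! hlt
  have hmul_lt (c : ℤ) {x : K} (hx : ‖x‖ < 1) : ‖c * x‖ < 1 := by
    rw [norm_mul]
    exact mul_lt_one_of_nonneg_of_lt_one_right (IsUltrametricDist.norm_intCast_le_one K c)
      (norm_nonneg x) hx
  have hnorm_lt : ‖(a * p + b * n : K)‖ < 1 :=
    (IsUltrametricDist.norm_add_le_max _ _).trans_lt (max_lt (hmul_lt a hp) (hmul_lt b hlt))
  rw [hbezout, norm_one] at hnorm_lt
  exact lt_irrefl _ hnorm_lt

variable [Fact p.Prime]

lemma norm_natCast_eq_pow_padicValNat (hp : ‖(p : K)‖ < 1) {n : ℕ} (hn : n ≠ 0) :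
    ‖(n : K)‖ = ‖(p : K)‖ ^ padicValNat p n := by
  have hprime : p.Prime := Fact.out
  conv_lhs => rw [← Nat.ordProj_mul_ordCompl_eq_self n p]
  rw [Nat.cast_mul, norm_mul, norm_natCast_eq_one_of_coprime hp (Nat.coprime_ordCompl hprime hn),
    mul_one, Nat.cast_pow, norm_pow, Nat.factorization_def n hprime]

lemma norm_factorial_mul_add_pred (hp : ‖(p : K)‖ < 1) (l : ℕ) :
    ‖((p * l + (p - 1)).factorial : K)‖ = ‖(p : K)‖ ^ l * ‖(l.factorial : K)‖ := by
  have hpos : 0 < p := (Fact.out : p.Prime).pos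
  rw [norm_natCast_eq_pow_padicValNat hp (Nat.factorial_ne_zero _),
    norm_natCast_eq_pow_padicValNat hp (Nat.factorial_ne_zero l),
    padicValNat_factorial_mul_add l (Nat.sub_lt hpos one_pos), padicValNat_factorial_mul,
    add_comm, pow_add]

lemma tendsto_truncArtinHasse_zero (hp : ‖(p : K)‖ < 1) :
    Tendsto (fun n => (truncArtinHasse p n : K)) atTop (𝓝 0) := by
  have hbound (n : ℕ) : ‖(truncArtinHasse p n : K)‖ ≤ ‖(p : K)‖ ^ (n / (p * 2)) := by
    obtain ⟨t, ht⟩ := prime_pow_dvd_truncArtinHasse (p := p) (n / (p * 2)) (n := n)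
      (by rw [← mul_assoc]; exact Nat.mul_div_le n _)
    rw [ht, Nat.cast_mul, Nat.cast_pow, norm_mul, norm_pow]
    exact mul_le_of_le_one_right (by positivity) (IsUltrametricDist.norm_natCast_le_one K t)
  have hpos : 0 < p := (Fact.out : p.Prime).pos
  exact squeeze_zero_norm hbound ((tendsto_pow_atTop_nhds_zero_of_lt_one (norm_nonneg _) hp).comp
    (Nat.tendsto_div_const_atTop (by positivity)))

end Ultrametric

section DworkTerms

/-- The coefficients `b_n` of `exp (π * (t - t ^ p))`, extended by `0` to negative `n`. -/
noncomputable def dworkCoeff (p : ℕ) {K : Type*} [Field K] (π : K) (n : ℤ) : K :=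
  if 0 ≤ n then dworkB p π n.toNat else 0

/-- The coefficient of `x ^ (-1 - l)` in `G = ∑ (-1) ^ l * l! * (π * x) ^ (-1 - l)`, where `x`
stands for `λ₀ x^{â₀}`. -/
noncomputable def gCoeff {K : Type*} [Field K] (π : K) (l : ℕ) : K :=
  (-1) ^ l * l.factorial * π ^ (-1 - (l : ℤ))

/-- The `l`-th term of the series for the coefficient of `x ^ (r - p)` in the product of
`exp (π * (x - x ^ p))` and `G` evaluated at `x ^ p`. -/
noncomputable def dworkTerm (p : ℕ) {K : Type*} [Field K] (π : K) (r : ℤ) (l : ℕ) : K :=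
  gCoeff π l * dworkCoeff p π (p * l + r)

section Field

variable {K : Type*} [Field K] {p : ℕ} {π : K}

lemma dworkCoeff_natCast (n : ℕ) : dworkCoeff p π n = dworkB p π n := by
  simp [dworkCoeff]

lemma dworkCoeff_of_neg {n : ℤ} (hn : n < 0) : dworkCoeff p π n = 0 := if_neg hn.not_ge

lemma intCast_mul_dworkCoeff [CharZero K] (hp : p ≠ 0) (n : ℤ) :
    n * dworkCoeff p π n =
      π * dworkCoeff p π (n - 1) - p * π * dworkCoeff p π (n - p) := by
  rcases lt_trichotomy n 0 with hn | rfl | hn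
  · simp [dworkCoeff_of_neg hn, dworkCoeff_of_neg (show n - 1 < 0 by omega),
      dworkCoeff_of_neg (show n - p < 0 by omega)]
  · simp [dworkCoeff_of_neg (show (-1 : ℤ) < 0 by omega),
      dworkCoeff_of_neg (show -(p : ℤ) < 0 by omega)]
  obtain ⟨k, rfl⟩ : ∃ k : ℕ, n = k + 1 := ⟨(n - 1).toNat, by omega⟩
  have hrec := succ_mul_dworkB_succ hp π k
  have hshift : dworkCoeff p π (k + 1 - p) =
      if p - 1 ≤ k then dworkB p π (k - (p - 1)) else 0 := by
    split_ifs with hpk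
    · rw [← dworkCoeff_natCast]
      congr 1
      omega
    · exact dworkCoeff_of_neg (by omega)
  rw [add_sub_cancel_right, dworkCoeff_natCast, hshift, ← hrec, ← Nat.cast_add_one,
    dworkCoeff_natCast]
  push_cast
  rfl

lemma succ_mul_gCoeff (hπ : π ≠ 0) (l : ℕ) : (l + 1) * gCoeff π l = -π * gCoeff π (l + 1) := by
  have hpow : π ^ (-1 - (l : ℤ)) = π * π ^ (-1 - ((l + 1 : ℕ) : ℤ)) := by
    rw [← zpow_one_add₀ hπ]
    push_cast
    ring_nf
  rw [gCoeff, gCoeff, Nat.factorial_succ, hpow]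
  push_cast
  ring

lemma mul_gCoeff_mul_pow (hπ : π ≠ 0) (l : ℕ) :
    π * gCoeff π l * π ^ l = (-1) ^ l * l.factorial := by
  have hcancel : π * π ^ (-1 - (l : ℤ)) * π ^ l = 1 := by
    rw [← zpow_one_add₀ hπ, ← zpow_natCast, ← zpow_add₀ hπ,
      show 1 + (-1 - (l : ℤ)) + l = 0 by ring, zpow_zero]
  rw [gCoeff]
  linear_combination (-1) ^ l * (l.factorial : K) * hcancel

lemma mul_dworkTerm_sub_one [CharZero K] (hp : p ≠ 0) (r : ℤ) (l : ℕ) :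
    π * dworkTerm p π (r - 1) l =
      (p * l + r : ℤ) * dworkTerm p π r l + p * π * dworkTerm p π (r - p) l := by
  have h := intCast_mul_dworkCoeff (π := π) hp (p * l + r)
  rw [dworkTerm, dworkTerm, dworkTerm, ← add_sub_assoc, ← add_sub_assoc]
  linear_combination -gCoeff π l * h

lemma succ_mul_dworkTerm (hπ : π ≠ 0) (r : ℤ) (l : ℕ) :
    (l + 1) * dworkTerm p π r l = -π * dworkTerm p π (r - p) (l + 1) := by
  have hindex : (p * (l + 1 : ℕ) + (r - p) : ℤ) = p * l + r := by push_cast; ring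
  rw [dworkTerm, dworkTerm, hindex, ← mul_assoc, succ_mul_gCoeff hπ, mul_assoc]

lemma mul_dworkTerm_telescoping [CharZero K] (hp : p ≠ 0) (hπ : π ≠ 0) (m l : ℕ) :
    π * dworkTerm p π (p - (m + 1 : ℕ)) l = -m * dworkTerm p π (p - m) l +
      p * π * (dworkTerm p π (-m) l - dworkTerm p π (-m) (l + 1)) := by
  have hdiff := mul_dworkTerm_sub_one (π := π) hp (p - m) l
  have hshift := succ_mul_dworkTerm (p := p) hπ (p - m) l
  have hindex : (p - m - p : ℤ) = -m := by ring
  rw [hindex] at hdiff hshift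
  rw [sub_sub] at hdiff
  push_cast at hdiff ⊢
  linear_combination hdiff + p * hshift

variable [CharZero K] [Fact p.Prime]

lemma ne_zero_of_pow_pred_eq_neg (hπ : π ^ (p - 1) = -(p : K)) : π ≠ 0 := by
  rintro rfl
  have hprime : p.Prime := Fact.out
  rw [zero_pow (Nat.sub_ne_zero_of_lt hprime.one_lt), zero_eq_neg, Nat.cast_eq_zero] at hπ
  exact hprime.ne_zero hπ

lemma factorial_mul_dworkTerm_pred (hπ : π ^ (p - 1) = -(p : K)) (l : ℕ) :
    (p * l + (p - 1)).factorial * (π * dworkTerm p π (p - 1) l) =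
      -(p ^ l * l.factorial) * (p * truncArtinHasse p (p * l + (p - 1))) := by
  have hpos : 0 < p := (Fact.out : p.Prime).pos
  have hindex : (p * l + (p - 1) : ℤ) = (p * l + (p - 1) : ℕ) := by omega
  have hpow : π ^ (p * l + (p - 1)) = (-1) ^ (l + 1) * p ^ (l + 1) * π ^ l := by
    have hexp : p * l + (p - 1) = (p - 1) * (l + 1) + l := by
      obtain ⟨q, rfl⟩ := Nat.exists_eq_add_of_le' hpos
      simp only [Nat.add_sub_cancel]
      ring
    rw [hexp, pow_add, pow_mul, hπ, neg_pow]
  have hsign : (-1 : K) ^ l * (-1) ^ (l + 1) = -1 := by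
    rw [← pow_add, ← add_assoc, ← two_mul, pow_succ, pow_mul]
    simp
  have hb := factorial_mul_dworkB (Fact.out : p.Prime).ne_zero hπ (p * l + (p - 1))
  rw [hpow] at hb
  rw [dworkTerm, hindex, dworkCoeff_natCast]
  calc _ = π * gCoeff π l * ((p * l + (p - 1)).factorial * dworkB p π (p * l + (p - 1))) := by ring
    _ = (-1) ^ (l + 1) * (π * gCoeff π l * π ^ l) * p ^ l *
          (p * truncArtinHasse p (p * l + (p - 1))) := by rw [hb]; ring
    _ = (-1 : K) ^ l * (-1) ^ (l + 1) * (p ^ l * l.factorial) *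
          (p * truncArtinHasse p (p * l + (p - 1))) := by
        rw [mul_gCoeff_mul_pow (ne_zero_of_pow_pred_eq_neg hπ)]; ring
    _ = _ := by rw [hsign, neg_one_mul]

end Field

section Norm

variable {K : Type*} [NormedField K] [IsUltrametricDist K] [CharZero K] {p : ℕ} [Fact p.Prime]
  {π : K}

lemma norm_mul_dworkTerm_pred (hp : ‖(p : K)‖ < 1) (hπ : π ^ (p - 1) = -(p : K)) (l : ℕ) :
    ‖π * dworkTerm p π (p - 1) l‖ = ‖(p * truncArtinHasse p (p * l + (p - 1)) : K)‖ := by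
  have h := congrArg norm (factorial_mul_dworkTerm_pred hπ l)
  rw [norm_mul, norm_factorial_mul_add_pred hp, norm_mul (-_), norm_neg,
    norm_mul (_ ^ _), norm_pow] at h
  have hne : ‖(p : K)‖ ^ l * ‖(l.factorial : K)‖ ≠ 0 := by
    have hp₀ := (Fact.out : p.Prime).ne_zero
    simp [hp₀, Nat.factorial_ne_zero]
  exact mul_left_cancel₀ hne h

lemma tendsto_dworkTerm_pred (hp : ‖(p : K)‖ < 1) (hπ : π ^ (p - 1) = -(p : K)) :
    Tendsto (dworkTerm p π (p - 1)) atTop (𝓝 0) := by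
  have hindex : Tendsto (fun l => p * l + (p - 1)) atTop atTop :=
    tendsto_atTop_mono (fun l => (Nat.le_mul_of_pos_left l (Fact.out : p.Prime).pos).trans
      (Nat.le_add_right _ _)) tendsto_id
  have hT : Tendsto (fun l => (p * truncArtinHasse p (p * l + (p - 1)) : K)) atTop (𝓝 0) := by
    simpa using ((tendsto_truncArtinHasse_zero hp).comp hindex).const_mul (p : K)
  have hmul : Tendsto (fun l => π * dworkTerm p π (p - 1) l) atTop (𝓝 0) := by
    rw [tendsto_zero_iff_norm_tendsto_zero] at hT ⊢
    simpa only [norm_mul_dworkTerm_pred hp hπ] using hT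
  simpa [ne_zero_of_pow_pred_eq_neg hπ] using hmul.const_mul π⁻¹

lemma tendsto_dworkTerm (hp : ‖(p : K)‖ < 1) (hπ : π ^ (p - 1) = -(p : K))
    {r : ℤ} (hr : r ≤ p - 1) : Tendsto (dworkTerm p π r) atTop (𝓝 0) := by
  have hp₀ : p ≠ 0 := (Fact.out : p.Prime).ne_zero
  have hπ₀ := ne_zero_of_pow_pred_eq_neg hπ
  have of_mul {f : ℕ → K} (hf : Tendsto (fun l => π * f l) atTop (𝓝 0)) :
      Tendsto f atTop (𝓝 0) := by
    simpa [hπ₀] using hf.const_mul π⁻¹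
  have intCast_mul (c : ℕ → ℤ) {f : ℕ → K} (hf : Tendsto f atTop (𝓝 0)) :
      Tendsto (fun l => (c l : K) * f l) atTop (𝓝 0) :=
    tendsto_zero_of_norm_le_one_mul (fun _ => IsUltrametricDist.norm_intCast_le_one K _) hf
  induction r, hr using Int.leInductionDown with
  | base => exact tendsto_dworkTerm_pred hp hπ
  | pred r _ ih =>
    have hshift : Tendsto (dworkTerm p π (r - p)) atTop (𝓝 0) := by
      rw [← tendsto_add_atTop_iff_nat 1]
      refine of_mul ?_
      simpa [succ_mul_dworkTerm hπ₀] using (intCast_mul (fun l => l + 1) ih).neg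
    refine of_mul ?_
    simpa only [mul_dworkTerm_sub_one hp₀, mul_zero, add_zero] using
      (intCast_mul (fun l => p * l + r) ih).add (hshift.const_mul (p * π))

lemma hasSum_dworkTerm (hp : ‖(p : K)‖ < 1) (hπ : π ^ (p - 1) = -(p : K)) (m : ℕ) :
    HasSum (dworkTerm p π (p - (m + 1 : ℕ))) (p * gCoeff π m) := by
  have hp₀ : p ≠ 0 := (Fact.out : p.Prime).ne_zero
  have hπ₀ := ne_zero_of_pow_pred_eq_neg hπ
  have hstep (m : ℕ) {s : K} (hs : HasSum (fun l => -m * dworkTerm p π (p - m) l) s) :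
      HasSum (fun l => π * dworkTerm p π (p - (m + 1 : ℕ)) l)
        (s + p * π * dworkTerm p π (-m) 0) := by
    have hnull : Tendsto (dworkTerm p π (-m)) atTop (𝓝 0) := tendsto_dworkTerm hp hπ (by omega)
    simpa only [mul_dworkTerm_telescoping hp₀ hπ₀] using
      hs.add ((hasSum_sub_succ_of_tendsto_zero hnull).mul_left (p * π))
  rw [← hasSum_mul_left_iff hπ₀]
  induction m with
  | zero =>
    have hzero : dworkTerm p π 0 0 = gCoeff π 0 := by
      simp [dworkTerm, dworkCoeff, dworkB]
    simpa [hzero, mul_assoc, mul_left_comm] using hstep 0 (s := 0) (by simp)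
  | succ m ih =>
    have hzero : dworkTerm p π (-(m + 1 : ℕ)) 0 = 0 := by
      rw [dworkTerm, dworkCoeff_of_neg (by omega), mul_zero]
    have hvalue : π * (p * gCoeff π (m + 1)) = -(m + 1 : ℕ) * (p * gCoeff π m) := by
      push_cast
      linear_combination (p : K) * succ_mul_gCoeff hπ₀ m
    rw [hvalue]
    simpa only [hzero, mul_zero, add_zero] using
      hstep (m + 1) (((hasSum_mul_left_iff hπ₀).1 ih).mul_left _)

end Norm

end DworkTerms

end AHG

theorem stmt_16_general (p : ℕ) [Fact p.Prime]
    {K : Type*} [NormedField K] [IsUltrametricDist K] [CharZero K] (hp : ‖(p : K)‖ < 1)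
    (π : K) (hπ : π ^ (p - 1) = -(p : K))
    (m : ℕ) (hm : 1 ≤ m) :
    HasSum (fun l : ℕ =>
      if m ≤ p * (l + 1) then
        (-1 : K) ^ l * (Nat.factorial l : K) * π ^ (-1 - (l : ℤ)) *
          AHG.dworkB p π (p * (l + 1) - m)
      else 0)
      ((p : K) * (-1 : K) ^ (m - 1) * (Nat.factorial (m - 1) : K) * π ^ (-(m : ℤ))) := by
  obtain ⟨m, rfl⟩ := Nat.exists_eq_add_of_le' hm
  convert AHG.hasSum_dworkTerm hp hπ m using 1
  · funext l
    split_ifs with hml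
    · have hindex : (p * l + (p - (m + 1 : ℕ)) : ℤ) = (p * (l + 1) - (m + 1) : ℕ) := by
        rw [Nat.cast_sub hml]
        push_cast
        ring
      rw [AHG.dworkTerm, hindex, AHG.dworkCoeff_natCast, AHG.gCoeff]
    · have hneg : (p * l + (p - (m + 1 : ℕ)) : ℤ) < 0 := by
        zify at hml
        push_cast
        linarith
      rw [AHG.dworkTerm, AHG.dworkCoeff_of_neg hneg, mul_zero]
  · have hexp : (-1 - (m : ℤ)) = -((m + 1 : ℕ) : ℤ) := by push_cast; ring
    rw [AHG.gCoeff, hexp, Nat.add_sub_cancel]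
    ring

/-- for every `m ≥ 1`,
`Σ_{l≥0} (-1)^l l! π^{-1-l} b_{p(l+1)-m} = p (-1)^{m-1} (m-1)! π^{-m}`
(with `b_j = 0` for `j < 0`); this is the coefficientwise form of `H = p·G`. -/
theorem stmt_16 (p : ℕ) [Fact p.Prime] (hp2 : p ≠ 2)
    {K : Type*} [NormedField K] [IsUltrametricDist K] [CompleteSpace K] [IsAlgClosed K]
    (ι : ℚ_[p] →+* K) (hι : ∀ x, ‖ι x‖ = ‖x‖)
    (π : K) (hπ : π ^ (p - 1) = -(p : K))
    (m : ℕ) (hm : 1 ≤ m) :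
    HasSum (fun l : ℕ =>
      if m ≤ p * (l + 1) then
        (-1 : K) ^ l * (Nat.factorial l : K) * π ^ (-1 - (l : ℤ)) *
          AHG.dworkB p π (p * (l + 1) - m)
      else 0)
      ((p : K) * (-1 : K) ^ (m - 1) * (Nat.factorial (m - 1) : K) * π ^ (-(m : ℤ))) := by
  have : CharZero K := charZero_of_injective_ringHom ι.injective
  exact stmt_16_general p (by simpa using (hι p).trans_lt Padic.norm_p_lt_one) π hπ m hm
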